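/- Let η be a nonnegative atomless random variable on a probability space (Ω, 𝓕, P), and let μ be a Borel probability measure on [0, ∞). Then the random variable X* := q_μ(1 − F_η(η)) has law μ, and E[η·X*] = ∫₀¹ q_η(1−p) · q_μ(p) dp, with equality in [0, ∞]. -/

import Mathlib

open MeasureTheory Set

/-- The quantile function of a Borel measure `μ` on `ℝ`:
`q_μ(p) = inf {x | p ≤ μ((-∞, x])}`. -/
noncomputable def quantile (μ : Measure ℝ) (p : ℝ) : ℝ :=
  sInf {x : ℝ | p ≤ (μ (Iic x)).toReal}

/-!
If `p` is uniform on `(0, 1)`, then so is `1 - p`, hence `q_η(1 - p)` has the law of `η`. Continuity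
of `F_η` gives `F_η(q_η(1 - p)) = 1 - p`, so substituting `q_η(1 - p)` for `η` in the pair
`(η, q_μ(1 - F_η(η)))` turns it into `(q_η(1 - p), q_μ(p))`. These two pairs therefore have the same
law; its second marginal is `μ`, and integrating a function against it gives the identity between
the integrals.
-/

open ProbabilityTheory
open scoped ENNReal Topology

section Quantile

variable (μ : Measure ℝ) {p : ℝ}

lemma bddBelow_setOf_le_cdf (hp : 0 < p) : BddBelow {x | p ≤ cdf μ x} := by
  obtain ⟨a, ha⟩ := ((tendsto_cdf_atBot μ).eventually_lt_const hp).exists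
  exact ⟨a, fun x hx ↦ ((monotone_cdf μ).reflect_lt (ha.trans_le hx)).le⟩

lemma nonempty_setOf_le_cdf (hp : p < 1) : {x | p ≤ cdf μ x}.Nonempty :=
  ((tendsto_cdf_atTop μ).eventually_const_le hp).exists

variable [IsProbabilityMeasure μ]

lemma quantile_eq_sInf_cdf (p : ℝ) : quantile μ p = sInf {x | p ≤ cdf μ x} := by
  simp only [quantile, cdf_eq_real, measureReal_def]

lemma le_cdf_quantile (hp : p ∈ Ioo (0 : ℝ) 1) : p ≤ cdf μ (quantile μ p) := by
  have hright : Filter.Tendsto (cdf μ) (𝓝[>] quantile μ p) (𝓝 (cdf μ (quantile μ p))) :=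
    ((cdf μ).right_continuous _).mono Ioi_subset_Ici_self
  refine ge_of_tendsto hright ?_
  filter_upwards [self_mem_nhdsWithin] with y hy
  rw [mem_Ioi, quantile_eq_sInf_cdf] at hy
  obtain ⟨x, hx, hxy⟩ := exists_lt_of_csInf_lt (nonempty_setOf_le_cdf μ hp.2) hy
  exact le_trans hx (monotone_cdf μ hxy.le)

lemma quantile_le_iff (hp : p ∈ Ioo (0 : ℝ) 1) {x : ℝ} : quantile μ p ≤ x ↔ p ≤ cdf μ x where
  mp h := (le_cdf_quantile μ hp).trans (monotone_cdf μ h)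
  mpr h := (quantile_eq_sInf_cdf μ p).trans_le (csInf_le (bddBelow_setOf_le_cdf μ hp.1) h)

lemma monotoneOn_quantile : MonotoneOn (quantile μ) (Ioo 0 1) := fun _ hp _ hq hpq ↦
  (quantile_le_iff μ hp).2 (hpq.trans (le_cdf_quantile μ hq))

lemma quantile_of_nonpos (hp : p ≤ 0) : quantile μ p = 0 := by
  have huniv : {x | p ≤ cdf μ x} = univ := eq_univ_of_forall fun x ↦ hp.trans (cdf_nonneg μ x)
  rw [quantile_eq_sInf_cdf, huniv, Real.sInf_univ]

lemma quantile_of_one_lt (hp : 1 < p) : quantile μ p = 0 := by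
  have hempty : {x | p ≤ cdf μ x} = ∅ :=
    eq_empty_of_forall_notMem fun x hx ↦ ((cdf_le_one μ x).trans_lt hp).not_ge hx
  rw [quantile_eq_sInf_cdf, hempty, Real.sInf_empty]

-- Off `(0, 1)` the junk value of `sInf` makes the quantile function vanish, except possibly at `1`.
@[fun_prop]
lemma measurable_quantile : Measurable (quantile μ) := by
  refine measurable_of_restrict_of_restrict_compl (measurableSet_Ioo (a := 0) (b := 1)) ?_ ?_
  · have hmono : Monotone ((Ioo (0 : ℝ) 1).domRestrict (quantile μ)) := fun p q hpq ↦
      monotoneOn_quantile μ p.2 q.2 hpq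
    exact hmono.measurable
  · refine (measurable_const (a := (0 : ℝ))).measurable_of_countable_ne ?_
    have hsub : {p : ↥(Ioo (0 : ℝ) 1)ᶜ | 0 ≠ quantile μ p} ⊆ {⟨1, by simp⟩} := by
      rintro ⟨p, hp⟩ hne
      by_contra hp_ne
      have hp_ne_one : p ≠ 1 := fun h ↦ hp_ne (Subtype.ext h)
      rcases le_or_gt p 0 with hp0 | hp0
      · exact hne (quantile_of_nonpos μ hp0).symm
      · have hp1 : 1 ≤ p := not_lt.1 fun h ↦ hp ⟨hp0, h⟩
        exact hne (quantile_of_one_lt μ (hp1.lt_of_ne' hp_ne_one)).symm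
    exact (countable_singleton _).mono hsub

lemma measurePreserving_quantile :
    MeasurePreserving (quantile μ) (volume.restrict (Ioo 0 1)) μ := by
  refine ⟨measurable_quantile μ, Measure.ext_of_Iic _ _ fun x ↦ ?_⟩
  have hpre : quantile μ ⁻¹' Iic x ∩ Ioo 0 1 = Iic (cdf μ x) ∩ Ioo 0 1 :=
    ext fun _ ↦ and_congr_left fun hp ↦ quantile_le_iff μ hp
  have hinter : Iic (cdf μ x) ∩ Ioc 0 1 = Ioc 0 (cdf μ x) := by
    rw [inter_comm, Ioc_inter_Iic, min_eq_right (cdf_le_one μ x)]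
  calc (volume.restrict (Ioo 0 1)).map (quantile μ) (Iic x)
      = volume (quantile μ ⁻¹' Iic x ∩ Ioo 0 1) := by
        rw [Measure.map_apply (measurable_quantile μ) measurableSet_Iic,
          Measure.restrict_apply (measurable_quantile μ measurableSet_Iic)]
    _ = volume (Iic (cdf μ x) ∩ Ioc 0 1) := by
        rw [hpre]
        exact measure_congr (ae_eq_set_inter (ae_eq_refl _) Ioo_ae_eq_Ioc)
    _ = μ (Iic x) := by rw [hinter, Real.volume_Ioc, sub_zero, ofReal_cdf]

lemma cdf_quantile (hμ : Continuous (cdf μ)) (hp : p ∈ Ioo (0 : ℝ) 1) :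
    cdf μ (quantile μ p) = p := by
  have hleft : Filter.Tendsto (cdf μ) (𝓝[<] quantile μ p) (𝓝 (cdf μ (quantile μ p))) :=
    hμ.continuousWithinAt
  refine le_antisymm (le_of_tendsto hleft ?_) (le_cdf_quantile μ hp)
  filter_upwards [self_mem_nhdsWithin] with y hy
  exact (not_le.1 ((quantile_le_iff μ hp).not.1 (not_le.2 hy))).le

end Quantile

lemma measurePreserving_one_sub_Ioo :
    MeasurePreserving (fun p : ℝ ↦ 1 - p) (volume.restrict (Ioo 0 1))
      (volume.restrict (Ioo 0 1)) := by
  have hpre : (fun p : ℝ ↦ 1 - p) ⁻¹' Ioo 0 1 = Ioo 0 1 := by simp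
  have hrestrict := (Measure.measurePreserving_sub_left (volume : Measure ℝ) 1).restrict_preimage
    (measurableSet_Ioo (a := 0) (b := 1))
  rwa [hpre] at hrestrict

section AntitoneCoupling

variable (μ ν : Measure ℝ) [IsProbabilityMeasure μ]

@[fun_prop]
lemma measurable_quantile_one_sub_cdf : Measurable fun x ↦ quantile μ (1 - cdf ν x) :=
  (measurable_quantile μ).comp ((monotone_cdf ν).measurable.const_sub 1)

variable [IsProbabilityMeasure ν]

lemma map_prodMk_quantile_one_sub_cdf (hν : Continuous (cdf ν)) :
    ν.map (fun x ↦ (x, quantile μ (1 - cdf ν x))) =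
      (volume.restrict (Ioo 0 1)).map fun p ↦ (quantile ν (1 - p), quantile μ p) := by
  have hquantile : MeasurePreserving (fun p ↦ quantile ν (1 - p)) (volume.restrict (Ioo 0 1)) ν :=
    (measurePreserving_quantile ν).comp measurePreserving_one_sub_Ioo
  calc ν.map (fun x ↦ (x, quantile μ (1 - cdf ν x)))
      = ((volume.restrict (Ioo 0 1)).map fun p ↦ quantile ν (1 - p)).map
          fun x ↦ (x, quantile μ (1 - cdf ν x)) := by rw [hquantile.map_eq]
    _ = (volume.restrict (Ioo 0 1)).map
          fun p ↦ (quantile ν (1 - p), quantile μ (1 - cdf ν (quantile ν (1 - p)))) :=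
        Measure.map_map (by fun_prop) hquantile.measurable
    _ = (volume.restrict (Ioo 0 1)).map fun p ↦ (quantile ν (1 - p), quantile μ p) := by
        refine Measure.map_congr ?_
        filter_upwards [ae_restrict_mem measurableSet_Ioo] with p hp
        have hp' : 1 - p ∈ Ioo (0 : ℝ) 1 := ⟨sub_pos.2 hp.2, sub_lt_self 1 hp.1⟩
        rw [cdf_quantile ν hν hp', sub_sub_cancel]

lemma measurePreserving_quantile_one_sub_cdf (hν : Continuous (cdf ν)) :
    MeasurePreserving (fun x ↦ quantile μ (1 - cdf ν x)) ν μ := by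
  refine ⟨measurable_quantile_one_sub_cdf μ ν, ?_⟩
  calc ν.map (fun x ↦ quantile μ (1 - cdf ν x))
      = (ν.map fun x ↦ (x, quantile μ (1 - cdf ν x))).snd :=
        (Measure.snd_map_prodMk measurable_id).symm
    _ = ((volume.restrict (Ioo 0 1)).map fun p ↦ (quantile ν (1 - p), quantile μ p)).snd := by
        rw [map_prodMk_quantile_one_sub_cdf μ ν hν]
    _ = (volume.restrict (Ioo 0 1)).map (quantile μ) := Measure.snd_map_prodMk (by fun_prop)
    _ = μ := (measurePreserving_quantile μ).map_eq

lemma lintegral_prodMk_quantile_one_sub_cdf (hν : Continuous (cdf ν)) {g : ℝ × ℝ → ℝ≥0∞}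
    (hg : Measurable g) :
    ∫⁻ x, g (x, quantile μ (1 - cdf ν x)) ∂ν =
      ∫⁻ p in Ioo 0 1, g (quantile ν (1 - p), quantile μ p) := by
  rw [← lintegral_map hg (by fun_prop), map_prodMk_quantile_one_sub_cdf μ ν hν,
    lintegral_map hg (by fun_prop)]

end AntitoneCoupling

theorem hardy_littlewood_attained_general {Ω : Type*} [MeasurableSpace Ω]
    (P : Measure Ω) [IsProbabilityMeasure P] {η : Ω → ℝ} (hη : AEMeasurable η P)
    (hatomless : Continuous fun x ↦ ((P.map η) (Iic x)).toReal)
    (μ : Measure ℝ) [IsProbabilityMeasure μ] :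
    P.map (fun ω ↦ quantile μ (1 - ((P.map η) (Iic (η ω))).toReal)) = μ ∧
    ∀ g : ℝ × ℝ → ℝ≥0∞, Measurable g →
      ∫⁻ ω, g (η ω, quantile μ (1 - ((P.map η) (Iic (η ω))).toReal)) ∂P
        = ∫⁻ p in Ioo 0 1, g (quantile (P.map η) (1 - p), quantile μ p) := by
  have : IsProbabilityMeasure (P.map η) := Measure.isProbabilityMeasure_map hη
  simp only [← measureReal_def, ← cdf_eq_real] at hatomless ⊢
  have hmeas := measurable_quantile_one_sub_cdf μ (P.map η)
  refine ⟨?_, fun g hg ↦ ?_⟩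
  · exact (AEMeasurable.map_map_of_aemeasurable hmeas.aemeasurable hη).symm.trans
      (measurePreserving_quantile_one_sub_cdf μ (P.map η) hatomless).map_eq
  · rw [← lintegral_prodMk_quantile_one_sub_cdf μ (P.map η) hatomless hg]
    exact (lintegral_map' (hg.comp (measurable_id.prodMk hmeas)).aemeasurable hη).symm

/-- If `η ≥ 0` is atomless and `μ` is a Borel probability measure on `[0, ∞)`, then
`X* := q_μ(1 - F_η(η))` has law `μ` and `E[η X*] = ∫₀¹ q_η(1-p) q_μ(p) dp` in `[0, ∞]`. -/
theorem hardy_littlewood_attained {Ω : Type*} [MeasurableSpace Ω]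
    (P : Measure Ω) [IsProbabilityMeasure P]
    (η : Ω → ℝ) (hη : Measurable η) (hη0 : ∀ ω, 0 ≤ η ω)
    (hatomless : Continuous fun x => ((P.map η) (Iic x)).toReal)
    (μ : Measure ℝ) [IsProbabilityMeasure μ] (hμ : μ (Iio 0) = 0) :
    P.map (fun ω => quantile μ (1 - ((P.map η) (Iic (η ω))).toReal)) = μ ∧
    ∫⁻ ω, ENNReal.ofReal (η ω * quantile μ (1 - ((P.map η) (Iic (η ω))).toReal)) ∂P
      = ∫⁻ p in Ioo (0:ℝ) 1,
          ENNReal.ofReal (quantile (P.map η) (1 - p) * quantile μ p) := by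
  obtain ⟨hlaw, hlintegral⟩ := hardy_littlewood_attained_general P hη.aemeasurable hatomless μ
  exact ⟨hlaw, hlintegral (fun z ↦ ENNReal.ofReal (z.1 * z.2)) (by fun_prop)⟩
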